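/- Let X be a Tychonoff space and suppose there exists a sequence (K_n)_{n∈ℕ} of non-empty compact subsets of X such that for every n the set K_n contains two disjoint subspaces each homeomorphic to K_{n+1}. Then there exists a linear subspace Z of C_p(X) such that the quotient space C_p(X)/Z (with the quotient topology) is metrizable and infinite-dimensional. -/

import Mathlib

open Topology Filter

/-- The space `C_p(X)` of continuous real functions with the topology of pointwise
convergence, realized as a submodule of `X → ℝ` (with the subspace topology
inherited from the product topology). -/
def Cp (X : Type*) [TopologicalSpace X] : Submodule ℝ (X → ℝ) where
  carrier := {f | Continuous f}
  add_mem' hf hg := hf.add hg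
  zero_mem' := continuous_const
  smul_mem' _c _f hf := continuous_const.mul hf

/-- A topological space is pseudocompact if every continuous real-valued function
on it is bounded. -/
def Pseudocompact (X : Type*) [TopologicalSpace X] : Prop :=
  ∀ f : X → ℝ, Continuous f → ∃ C, ∀ x, |f x| ≤ C

namespace CpQ

theorem ext_aux {X : Type*} [TopologicalSpace X] [T2Space X] [CompletelyRegularSpace X]
    {Y : Type*} [TopologicalSpace Y] [CompactSpace Y] (j : Y → X) (hj : Continuous j)
    (hi : Function.Injective j) (u : Y → ℝ) (hu : Continuous u) :
    ∃ g : X → ℝ, Continuous g ∧ ∀ y, g (j y) = u y := by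
  have : T35Space X := {}
  have hc : IsClosedEmbedding (fun y => stoneCechUnit (j y)) :=
    Continuous.isClosedEmbedding (continuous_stoneCechUnit.comp hj)
      (injective_stoneCechUnit_of_t35Space.comp hi)
  obtain ⟨g, hg⟩ := ContinuousMap.exists_extension hc (⟨u, hu⟩ : C(Y, ℝ))
  refine ⟨fun x => g (stoneCechUnit x), g.continuous.comp continuous_stoneCechUnit, fun y => ?_⟩
  exact DFunLike.congr_fun hg y

def I : ℕ → Type
  | 0 => Unit
  | n + 1 => I n × Bool

instance instI : ∀ n, Fintype (I n)
  | 0 => inferInstanceAs (Fintype Unit)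
  | n + 1 => by
    have := instI n
    exact inferInstanceAs (Fintype (I n × Bool))

theorem card_I : ∀ n, Fintype.card (I n) = 2 ^ n
  | 0 => rfl
  | n + 1 => by
    have : Fintype.card (I (n + 1)) = Fintype.card (I n × Bool) := rfl
    rw [this, Fintype.card_prod, card_I n, Fintype.card_bool, pow_succ]

def E {X : Type*} {Y : ℕ → Type*} (i : Y 0 → X) (a : ∀ n, Bool → Y (n + 1) → Y n) :
    ∀ n, I n → Y n → X
  | 0 => fun _ => i
  | n + 1 => fun s y => E i a n s.1 (a n s.2 y)

section
variable {X : Type*} {Y : ℕ → Type*} (i : Y 0 → X) (a : ∀ n, Bool → Y (n + 1) → Y n)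

theorem E_inj (hi : Function.Injective i)
    (ha : ∀ n b b' y y', a n b y = a n b' y' → b = b' ∧ y = y') :
    ∀ n s s' y y', E i a n s y = E i a n s' y' → s = s' ∧ y = y'
  | 0, _, _, _, _, h => ⟨rfl, hi h⟩
  | n + 1, s, s', y, y', h => by
    obtain ⟨h1, h2⟩ := E_inj hi ha n _ _ _ _ h
    obtain ⟨h3, h4⟩ := ha _ _ _ _ _ h2
    exact ⟨Prod.ext h1 h3, h4⟩

theorem E_cont [TopologicalSpace X] [∀ n, TopologicalSpace (Y n)] (hi : Continuous i)
    (ha : ∀ n b, Continuous (a n b)) : ∀ n s, Continuous (E i a n s)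
  | 0, _ => hi
  | n + 1, s => (E_cont hi ha n s.1).comp (ha n s.2)

theorem sum_succ (f : X → ℝ) (n : ℕ) (y : Y (n + 1)) :
    ∑ s, f (E i a (n + 1) s y) = ∑ b : Bool, ∑ s, f (E i a n s (a n b y)) := by
  have : ∑ s, f (E i a (n + 1) s y) = ∑ s : I n × Bool, f (E i a n s.1 (a n s.2 y)) := rfl
  rw [this, Fintype.sum_prod_type, Finset.sum_comm]

theorem sum_eq (f g : X → ℝ) (N : ℕ)
    (h : ∀ y, ∑ s, f (E i a N s y) = ∑ s, g (E i a N s y)) (m : ℕ) (hm : N ≤ m) :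
    ∀ y, ∑ s, f (E i a m s y) = ∑ s, g (E i a m s y) := by
  induction m, hm using Nat.le_induction with
  | base => exact h
  | succ m _ ih =>
    intro y
    rw [sum_succ, sum_succ]
    exact Finset.sum_congr rfl fun b _ => ih _

theorem E_ne (hi : Function.Injective i)
    (ha : ∀ n b b' y y', a n b y = a n b' y' → b = b' ∧ y = y')
    (x : ∀ n, Y n) (hx : ∀ n b y, a n b y ≠ x n) (k : ℕ) (s : I k) (N : ℕ) (hN : k + 1 ≤ N) :
    ∀ t y, E i a N t y ≠ E i a k s (x k) := by
  induction N, hN using Nat.le_induction with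
  | base =>
    intro t y h
    exact hx _ _ _ (E_inj i a hi ha k _ _ _ _ h).2
  | succ m _ ih => intro t y; exact ih _ _

theorem S_eq (hi : Function.Injective i)
    (ha : ∀ n b b' y y', a n b y = a n b' y' → b = b' ∧ y = y')
    (x : ∀ n, Y n) (hx : ∀ n b y, a n b y ≠ x n) (k k' : ℕ) (s : I k) (s' : I k')
    (h : E i a k s (x k) = E i a k' s' (x k')) : k = k' := by
  rcases lt_trichotomy k k' with h1 | h1 | h1
  · exact absurd h.symm (E_ne i a hi ha x hx k s k' h1 _ _)
  · exact h1
  · exact absurd h (E_ne i a hi ha x hx k' s' k h1 _ _)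

theorem key [TopologicalSpace X] [T2Space X] [CompletelyRegularSpace X]
    [∀ n, TopologicalSpace (Y n)] [∀ n, CompactSpace (Y n)]
    (hi : Function.Injective i) (hic : Continuous i)
    (ha : ∀ n b b' y y', a n b y = a n b' y' → b = b' ∧ y = y')
    (hac : ∀ n b, Continuous (a n b))
    (x : ∀ n, Y n) (hx : ∀ n b y, a n b y ≠ x n)
    (F : Finset X) (N : ℕ) (hN : F.card < 2 ^ N) (f : X → ℝ) (hf : Continuous f) (c : ℕ → ℝ) :
    ∃ g : X → ℝ, Continuous g ∧ (∀ m, N ≤ m → ∀ y, ∑ s, g (E i a m s y) = ∑ s, f (E i a m s y))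
      ∧ (∀ k, k < N → ∑ s, g (E i a k s (x k)) = c k)
      ∧ (∀ p ∈ F, g p = 0 ∨ ∃ k, k < N ∧ g p = c k / 2 ^ k) := by
  classical
  obtain ⟨s₀, hs₀⟩ : ∃ s₀ : I N, ∀ y, E i a N s₀ y ∉ F := by
    by_contra! hcon
    choose y hy using hcon
    have : Fintype.card (I N) ≤ F.card := by
      rw [← Finset.card_univ]
      refine Finset.card_le_card_of_injOn (fun s => E i a N s (y s)) (fun s _ => hy s) ?_
      intro s _ s' _ h
      exact (E_inj i a hi ha N _ _ _ _ h).1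
    rw [card_I] at this
    omega
  let v : X → ℝ := fun p =>
    if h : ∃ k, k < N ∧ ∃ s, p = E i a k s (x k) then c h.choose / 2 ^ h.choose else 0
  have hv0 : ∀ p, v p = 0 ∨ ∃ k, k < N ∧ v p = c k / 2 ^ k := by
    intro p
    by_cases h : ∃ k, k < N ∧ ∃ s, p = E i a k s (x k)
    · right
      exact ⟨h.choose, h.choose_spec.1, by simp only [v, dif_pos h]⟩
    · left
      simp only [v, dif_neg h]
  have hv1 : ∀ k, k < N → ∀ s, v (E i a k s (x k)) = c k / 2 ^ k := by
    intro k hk s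
    have h : ∃ k', k' < N ∧ ∃ s', E i a k s (x k) = E i a k' s' (x k') := ⟨k, hk, s, rfl⟩
    simp only [v, dif_pos h]
    obtain ⟨s', hs'⟩ := h.choose_spec.2
    rw [← S_eq i a hi ha x hx _ _ _ _ hs']
  let A : Set X := {p | (p ∈ F ∨ p ∈ ⋃ k : Fin N, Set.range fun s => E i a k s (x k)) ∧
    ∀ s y, E i a N s y ≠ p}
  have hA : A.Finite := by
    refine Set.Finite.subset (F.finite_toSet.union
      (Set.finite_iUnion fun k : Fin N => Set.finite_range fun s => E i a k s (x k))) ?_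
    rintro p ⟨hp, -⟩
    exact hp
  have : Finite A := hA
  letI : TopologicalSpace (I N) := ⊥
  have : DiscreteTopology (I N) := ⟨rfl⟩
  let j : (I N × Y N) ⊕ A → X := Sum.elim (fun q => E i a N q.1 q.2) Subtype.val
  let u : (I N × Y N) ⊕ A → ℝ :=
    Sum.elim (fun q => if q.1 = s₀ then ∑ t, f (E i a N t q.2) else 0) (fun p => v p)
  have hj : Continuous j := by
    refine Continuous.sumElim ?_ continuous_subtype_val
    rw [continuous_prod_of_discrete_left]
    exact fun s => E_cont i a hic hac N s
  have hji : Function.Injective j := by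
    rintro (⟨s, y⟩ | ⟨p, hp⟩) (⟨s', y'⟩ | ⟨p', hp'⟩) h
    · obtain ⟨h1, h2⟩ := E_inj i a hi ha N s s' y y' h
      rw [h1, h2]
    · exact absurd h (hp'.2 _ _)
    · exact absurd h.symm (hp.2 _ _)
    · have : p = p' := h
      subst this
      rfl
  have hu : Continuous u := by
    refine Continuous.sumElim ?_ continuous_of_discreteTopology
    rw [continuous_prod_of_discrete_left]
    intro s
    by_cases hs : s = s₀
    · simp only [hs, if_true]
      exact continuous_finsetSum _ fun t _ => hf.comp (E_cont i a hic hac N t)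
    · simp only [hs, if_false]
      exact continuous_const
  obtain ⟨g, hg, hgu⟩ := ext_aux j hj hji u hu
  have hg1 : ∀ s y, g (E i a N s y) = if s = s₀ then ∑ t, f (E i a N t y) else 0 :=
    fun s y => hgu (Sum.inl (s, y))
  have hg2 : ∀ p ∈ A, g p = v p := fun p hp => hgu (Sum.inr ⟨p, hp⟩)
  refine ⟨g, hg, ?_, ?_, ?_⟩
  · refine sum_eq i a g f N ?_
    intro y
    simp [hg1]
  · intro k hk
    have : ∀ s, g (E i a k s (x k)) = c k / 2 ^ k := by
      intro s
      rw [hg2, hv1 k hk]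
      refine ⟨Or.inr (Set.mem_iUnion.2 ⟨⟨k, hk⟩, s, rfl⟩), E_ne i a hi ha x hx k s N hk⟩
    simp only [this, Finset.sum_const, Finset.card_univ, card_I, nsmul_eq_mul]
    push_cast
    field_simp
  · intro p hp
    by_cases h : ∀ s y, E i a N s y ≠ p
    · rw [hg2 p ⟨Or.inl hp, h⟩]
      exact hv0 p
    · push Not at h
      obtain ⟨s, y, rfl⟩ := h
      left
      rw [hg1, if_neg]
      rintro rfl
      exact hs₀ y hp

theorem main [TopologicalSpace X] [T2Space X] [CompletelyRegularSpace X]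
    [∀ n, TopologicalSpace (Y n)] [∀ n, CompactSpace (Y n)]
    (hi : Function.Injective i) (hic : Continuous i)
    (ha : ∀ n b b' y y', a n b y = a n b' y' → b = b' ∧ y = y')
    (hac : ∀ n b, Continuous (a n b))
    (x : ∀ n, Y n) (hx : ∀ n b y, a n b y ≠ x n) :
    ∃ Z : Submodule ℝ (Cp X),
      TopologicalSpace.MetrizableSpace (Cp X ⧸ Z) ∧
      ¬ FiniteDimensional ℝ (Cp X ⧸ Z) := by
  classical
  let T : Cp X →ₗ[ℝ] (ℕ → ℝ) :=
    { toFun := fun f k => ∑ s, f.1 (E i a k s (x k))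
      map_add' := by
        intro f g
        ext k
        simp [Finset.sum_add_distrib]
      map_smul' := by
        intro r f
        ext k
        simp [Finset.mul_sum] }
  have hT : ∀ f k, T f k = ∑ s, f.1 (E i a k s (x k)) := fun _ _ => rfl
  have hTc : Continuous T := by
    refine continuous_pi fun k => ?_
    refine continuous_finsetSum _ fun s _ => ?_
    exact (continuous_apply _).comp continuous_subtype_val
  let Z := LinearMap.ker T
  let T' : (Cp X ⧸ Z) →ₗ[ℝ] (ℕ → ℝ) := Z.liftQ T le_rfl
  have hT' : ∀ f, T' (Z.mkQ f) = T f := fun f => Z.liftQ_apply T f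
  have hinj : Function.Injective T' := by
    rw [← LinearMap.ker_eq_bot]
    exact Submodule.ker_liftQ_eq_bot' _ _ rfl
  have hcont : Continuous T' := by
    refine (Z.isOpenQuotientMap_mkQ.isQuotientMap).continuous_iff.2 ?_
    exact hTc
  refine ⟨Z, ?_, ?_⟩
  · have hind : IsInducing T' := by
      rw [IsTopologicalAddGroup.isInducing_iff_nhds_zero]
      refine le_antisymm ?_ ?_
      · rw [← Filter.map_le_iff_le_comap]
        have := hcont.tendsto 0
        rwa [map_zero] at this
      · intro U hU
        have hU' : Z.mkQ ⁻¹' U ∈ 𝓝 (0 : Cp X) := by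
          have h0 : Continuous Z.mkQ := Z.isOpenQuotientMap_mkQ.isQuotientMap.continuous
          apply h0.tendsto 0
          rwa [map_zero]
        rw [nhds_subtype_eq_comap, Filter.mem_comap] at hU'
        obtain ⟨V, hV, hVU⟩ := hU'
        have hV' : V ∈ 𝓝 (0 : X → ℝ) := hV
        rw [nhds_pi, Filter.mem_pi] at hV'
        obtain ⟨F, hF, t, ht, htV⟩ := hV'
        obtain ⟨ε, hε, hball⟩ : ∃ ε > 0, ∀ p ∈ F, ∀ r : ℝ, |r| < ε → r ∈ t p := by
          have : ∀ᶠ r in 𝓝 (0 : ℝ), ∀ p ∈ F, r ∈ t p :=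
            (Filter.eventually_all_finite hF).2 fun p _ => ht p
          obtain ⟨ε, hε, h⟩ := Metric.eventually_nhds_iff.1 this
          exact ⟨ε, hε, fun p hp r hr => h (by simpa using hr) p hp⟩
        have hN : hF.toFinset.card < 2 ^ hF.toFinset.card := Nat.lt_two_pow_self
        set N := hF.toFinset.card with hNdef
        rw [Filter.mem_comap]
        refine ⟨Set.pi (Set.Iio N) fun _ => Metric.ball 0 ε,
          set_pi_mem_nhds (Set.finite_Iio N) fun _ _ => Metric.ball_mem_nhds _ hε, ?_⟩
        intro q hq
        obtain ⟨f, rfl⟩ := Z.mkQ_surjective q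
        rw [Set.mem_preimage, hT'] at hq
        obtain ⟨g, hg, hg1, hg2, hg3⟩ := key i a hi hic ha hac x hx hF.toFinset N hN f.1 f.2 (T f)
        let G : Cp X := ⟨g, hg⟩
        have hTG : T G = T f := by
          ext k
          by_cases hk : k < N
          · exact hg2 k hk
          · exact hg1 k (not_lt.1 hk) (x k)
        have : Z.mkQ f = Z.mkQ G := hinj (by rw [hT', hT', hTG])
        rw [this]
        apply hVU
        apply htV
        intro p hp
        apply hball p hp
        rcases hg3 p (hF.mem_toFinset.2 hp) with h | ⟨k, hk, h⟩
        · change |g p| < ε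
          rw [h]; simpa using hε
        · change |g p| < ε
          rw [h, abs_div]
          have h1 : |T f k| < ε := by simpa using hq k hk
          have h2 : (1 : ℝ) ≤ |2 ^ k| := by
            rw [abs_of_pos (by positivity)]
            exact one_le_pow₀ (by norm_num)
          exact lt_of_le_of_lt (div_le_self (abs_nonneg _) h2) h1
    exact (IsEmbedding.mk hind hinj).metrizableSpace
  · intro hfin
    set d := Module.finrank ℝ (Cp X ⧸ Z) with hd
    let P : (Cp X ⧸ Z) →ₗ[ℝ] (Fin (d + 1) → ℝ) :=
      (LinearMap.funLeft ℝ ℝ (fun k : Fin (d + 1) => (k : ℕ))).comp T'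
    have hP : Function.Surjective P := by
      intro c
      obtain ⟨g, hg, -, hg2, -⟩ := key i a hi hic ha hac x hx ∅ (d + 1) (by simp)
        (fun _ => 0) continuous_const (fun k => if h : k < d + 1 then c ⟨k, h⟩ else 0)
      refine ⟨Z.mkQ ⟨g, hg⟩, ?_⟩
      ext k
      have := hg2 k k.2
      simp only [k.2, dif_pos] at this
      exact this
    have := LinearMap.finrank_le_finrank_of_surjective hP
    rw [Module.finrank_fin_fun] at this
    omega

end

end CpQ

theorem cp_has_metrizable_quotient_of_compact_copies
    (X : Type*) [TopologicalSpace X] [T2Space X] [CompletelyRegularSpace X]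
    (K : ℕ → Set X)
    (hne : ∀ n, (K n).Nonempty)
    (hcomp : ∀ n, IsCompact (K n))
    (hcopies : ∀ n, ∃ e₀ e₁ : K (n + 1) → K n,
      Topology.IsEmbedding e₀ ∧ Topology.IsEmbedding e₁ ∧
      Disjoint (Set.range e₀) (Set.range e₁)) :
    ∃ Z : Submodule ℝ (Cp X),
      TopologicalSpace.MetrizableSpace (Cp X ⧸ Z) ∧
      ¬ FiniteDimensional ℝ (Cp X ⧸ Z) := by
  choose e₀ e₁ h₀ h₁ hd using hcopies
  have hdis : ∀ n y y', e₀ n y ≠ e₁ n y' := fun n y y' h =>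
    Set.disjoint_left.1 (hd n) ⟨y, rfl⟩ ⟨y', h.symm⟩
  have : ∀ n, CompactSpace (K (2 * n)) := fun n => isCompact_iff_compactSpace.1 (hcomp _)
  let a : ∀ n, Bool → K (2 * (n + 1)) → K (2 * n) := fun n b y =>
    e₀ (2 * n) (bif b then e₁ (2 * n + 1) y else e₀ (2 * n + 1) y)
  let x : ∀ n, K (2 * n) := fun n =>
    e₁ (2 * n) ⟨(hne (2 * n + 1)).some, (hne (2 * n + 1)).some_mem⟩
  refine CpQ.main (Y := fun n => K (2 * n)) Subtype.val a Subtype.val_injective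
    continuous_subtype_val ?_ ?_ x ?_
  · intro n b b' y y' h
    have h := (h₀ (2 * n)).injective h
    cases b <;> cases b'
    · exact ⟨rfl, (h₀ (2 * n + 1)).injective h⟩
    · exact absurd h (hdis _ _ _)
    · exact absurd h.symm (hdis _ _ _)
    · exact ⟨rfl, (h₁ (2 * n + 1)).injective h⟩
  · intro n b
    cases b
    · exact (h₀ (2 * n)).continuous.comp (h₀ (2 * n + 1)).continuous
    · exact (h₀ (2 * n)).continuous.comp (h₁ (2 * n + 1)).continuous
  · intro n b y
    exact hdis _ _ _
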